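/- arXiv:1107.5339 — 6 statements merged into one kernel-verified Lean document; each statement's English description precedes it below -/
import Mathlib

section
/- Let G be a group acting properly discontinuously on a topological space X (for all compact K, L ⊆ X, the set {g ∈ G : (g • K) ∩ L ≠ ∅} is finite), let n ≥ 1 and let P be a subgroup of Equiv.Perm (Fin n). Then the action of the permutational wreath product (Fin n → G) ⋊ P on Fin n → X (with the product topology) given by ((f, σ) • x) i = f i • x (σ⁻¹ i) is properly discontinuous. -/
open Pointwise

/-- The natural action of `Equiv.Perm (Fin d)` on `Fin d → G`, `(σ • f) i = f (σ⁻¹ i)`,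
as a homomorphism to the automorphism group. -/
def permAut (G : Type*) [Group G] (d : ℕ) :
    Equiv.Perm (Fin d) →* MulAut (Fin d → G) where
  toFun σ :=
    { toFun := fun f i => f (σ⁻¹ i)
      invFun := fun f i => f (σ i)
      left_inv := fun f => funext fun i => by simp
      right_inv := fun f => funext fun i => by simp
      map_mul' := fun f g => rfl }
  map_one' := by
    ext f i
    simp
  map_mul' := fun σ τ => by
    ext f i
    simp [mul_inv_rev]

/-- The permutational wreath product `G ≀ P` of `G` with a subgroup
`P ≤ Equiv.Perm (Fin n)`: the semidirect product `(Fin n → G) ⋊ P`. -/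
abbrev WrP (G : Type*) [Group G] (n : ℕ) (P : Subgroup (Equiv.Perm (Fin n))) :=
  (Fin n → G) ⋊[(permAut G n).comp P.subtype] P

/-- The action of the wreath product on `Fin n → X`: `((f, σ) • x) i = f i • x (σ⁻¹ i)`. -/
def wrSmul {G X : Type*} [Group G] [SMul G X] {n : ℕ}
    {P : Subgroup (Equiv.Perm (Fin n))} (w : WrP G n P) (x : Fin n → X) :
    Fin n → X :=
  fun i => w.left i • x ((w.right : Equiv.Perm (Fin n))⁻¹ i)

/-!
For a fixed permutation `σ`, the element `(f, σ)` moves `K` by first permuting coordinates, which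
yields a compact set independent of `f`, and then letting `f` act coordinatewise. Only finitely many
`f` make the result meet `L`, since each `f i` is constrained by the compact projections to the
coordinate `i`; and there are only finitely many `σ`.
-/

section

variable {ι κ T Γ G X Y Z : Type*} [TopologicalSpace X] [TopologicalSpace Y] [TopologicalSpace Z]

theorem properlyDiscontinuousSMul_pi [Finite ι] {M E : ι → Type*}
    [∀ i, TopologicalSpace (E i)] [∀ i, SMul (M i) (E i)]
    [∀ i, ProperlyDiscontinuousSMul (M i) (E i)] :
    ProperlyDiscontinuousSMul (∀ i, M i) (∀ i, E i) where
  finite_disjoint_inter_image {K L} hK hL := by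
    have finite_coord (i : ι) :
        {g : M i | ((g • ·) '' (Function.eval i '' K) ∩ Function.eval i '' L).Nonempty}.Finite :=
      finite_disjoint_inter_image (hK.image (continuous_apply i)) (hL.image (continuous_apply i))
    refine (Set.Finite.pi' finite_coord).subset ?_
    rintro f ⟨_, ⟨x, hxK, rfl⟩, hfxL⟩ i
    exact ⟨f i • x i, ⟨x i, ⟨x, hxK, rfl⟩, rfl⟩, ⟨_, hfxL, rfl⟩⟩

theorem finite_smul_comp_image_inter [Finite T] [SMul Γ Y]
    [ProperlyDiscontinuousSMul Γ Y] {φ : T → Z → Y} (hφ : ∀ t, Continuous (φ t))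
    {K : Set Z} {L : Set Y} (hK : IsCompact K) (hL : IsCompact L) :
    {p : Γ × T | ((fun z => p.1 • φ p.2 z) '' K ∩ L).Nonempty}.Finite := by
  have finite_fiber (t : T) : {γ : Γ | ((γ • ·) '' (φ t '' K) ∩ L).Nonempty}.Finite :=
    finite_disjoint_inter_image (hK.image (hφ t)) hL
  refine (Set.finite_iUnion fun t => (finite_fiber t).image (·, t)).subset ?_
  rintro ⟨γ, t⟩ hγt
  refine Set.mem_iUnion.2 ⟨t, γ, ?_, rfl⟩
  simpa only [Set.mem_ofPred_eq, Set.image_image] using hγt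

theorem wreath_product_properly_discontinuous_general [Finite ι] [Finite T] [SMul G X]
    [ProperlyDiscontinuousSMul G X] (s : T → ι → κ) {K : Set (κ → X)} {L : Set (ι → X)}
    (hK : IsCompact K) (hL : IsCompact L) :
    {p : (ι → G) × T | ((fun x i => p.1 i • x (s p.2 i)) '' K ∩ L).Nonempty}.Finite :=
  have : ProperlyDiscontinuousSMul (ι → G) (ι → X) := properlyDiscontinuousSMul_pi
  finite_smul_comp_image_inter (φ := fun t x => x ∘ s t) (fun _ => by fun_prop) hK hL

end

/-- If a group `G` acts properly discontinuously on a topological space `X`, then for `n ≥ 1`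
and a subgroup `P` of `Equiv.Perm (Fin n)` the action
`((f, σ) • x) i = f i • x (σ⁻¹ i)` of the permutational wreath product `(Fin n → G) ⋊ P`
on `Fin n → X` (product topology) is properly discontinuous. -/
theorem wreath_product_properly_discontinuous
    (G X : Type*) [Group G] [TopologicalSpace X] [MulAction G X]
    (hG : ∀ K L : Set X, IsCompact K → IsCompact L →
      {g : G | (g • K) ∩ L ≠ ∅}.Finite)
    (n : ℕ) (hn : 1 ≤ n) (P : Subgroup (Equiv.Perm (Fin n))) :
    ∀ K L : Set (Fin n → X), IsCompact K → IsCompact L →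
      {w : WrP G n P | (wrSmul w '' K) ∩ L ≠ ∅}.Finite := by
  intro K L hK hL
  simp only [← Set.nonempty_iff_ne_empty] at hG ⊢
  have : ProperlyDiscontinuousSMul G X := properlyDiscontinuousSMul_iff.2 (hG _ _)
  have finite_pairs := wreath_product_properly_discontinuous_general (G := G)
    (fun σ : P => ⇑(σ : Equiv.Perm (Fin n))⁻¹) hK hL
  exact finite_pairs.preimage (f := SemidirectProduct.equivProd) (Equiv.injective _).injOn
end

section
/- Let (G_n, φ_n, d_n) be a similar group contracting to a sequence of finite subsets (N_n). For each n, let F_n be the presented group with generating set N_n and relators all words of length at most 3 in the alphabet N_n that represent the identity element of G_n, let ι_n : N_n → F_n be the canonical map of generators, and let π_n : F_n → G_n be the homomorphism sending ι_n(x) to x. Then for every n there exists a unique group homomorphism φ̂_n : F_n → F_{n+1} ≀ d_{n+1} such that for every x ∈ N_n, the permutation part of φ̂_n(ι_n x) equals the permutation part of φ_n(x), and the i-th entry of φ̂_n(ι_n x) equals ι_{n+1} applied to the i-th entry of φ_n(x) (these entries lie in N_{n+1} by the contraction hypothesis). -/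
/-- The permutational wreath product `G ≀ d = (Fin d → G) ⋊ Equiv.Perm (Fin d)`. -/
abbrev Wr (G : Type*) [Group G] (d : ℕ) :=
  (Fin d → G) ⋊[permAut G d] Equiv.Perm (Fin d)

/-- Multi-indices for the entries of `φ_n^m`: the `k`-th letter indexes a coordinate at
level `n + k`. -/
def Word (d : ℕ → ℕ) (n m : ℕ) : Type := (k : Fin m) → Fin (d (n + k))

/-- The entry (state) of `φ_n^m (g)` at the multi-index `w : Word d n m`, for a similar
group given by `φ n : G n →* (G (n+1)) ≀ (d n)`. -/
def st {G : ℕ → Type*} [∀ n, Group (G n)] {d : ℕ → ℕ}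
    (φ : ∀ n, G n →* Wr (G (n+1)) (d n)) (n : ℕ) :
    (m : ℕ) → G n → Word d n m → G (n + m)
  | 0, g, _ => g
  | m+1, g, w =>
      (φ (n+m) (st φ n m g fun k => w k.castSucc)).left (w (Fin.last m))

/-- Relators: all words of length at most 3 in the alphabet `N n` that represent the
identity of `G n`. -/
def rels {G : ℕ → Type*} [∀ n, Group (G n)] (N : ∀ n, Set (G n)) (n : ℕ) :
    Set (FreeGroup (N n)) :=
  {w : FreeGroup (N n) |
    (∃ l : List (N n), l.length ≤ 3 ∧ w = (l.map FreeGroup.of).prod) ∧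
    FreeGroup.lift (fun x : N n => (x : G n)) w = 1}

/-- The finitely presented cover `F n`: generators `N n`, relators the words of length at
most 3 in `N n` that are trivial in `G n`. -/
abbrev FGrp {G : ℕ → Type*} [∀ n, Group (G n)] (N : ∀ n, Set (G n)) (n : ℕ) :=
  PresentedGroup (rels N n)

/-- The canonical map of generators `ι n : N n → F n`. -/
def iota {G : ℕ → Type*} [∀ n, Group (G n)] (N : ∀ n, Set (G n)) (n : ℕ)
    (x : N n) : FGrp N n :=
  PresentedGroup.of x

/-!
Let `φ : G →* H ≀ d` send `S ⊆ G` to elements with entries in `T ⊆ H`. Replacing the entries of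
`φ x`, for `x ∈ S`, by the corresponding free generators lifts `φ` to a homomorphism from the free
group on `S` to the wreath product of the free group on `T`. The entries of a product of `m`
elements of a wreath product are products of `m` entries, so this lift sends a positive word of
length at most `k` to an element whose entries are again positive words of length at most `k`. If
the word is trivial in `G`, then so is its image under `φ`, hence the permutation part is trivial
and each entry is a word that is trivial in `H`: relators go to tuples of relators.
-/

namespace Wr

variable {G H : Type*} [Group G] [Group H] {d : ℕ}

/-- The homomorphism `G ≀ d → H ≀ d` applying `f : G → H` to every entry and keeping the
permutation part. -/
def map (f : G →* H) (d : ℕ) : Wr G d →* Wr H d :=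
  SemidirectProduct.map (f.compLeft (Fin d)) (MonoidHom.id _) fun _ => rfl

theorem mul_left_apply (a b : Wr G d) (i : Fin d) :
    (a * b).left i = a.left i * b.left (a.right⁻¹ i) :=
  rfl

theorem exists_prod_left_apply_eq {α : Type*} (f : α → G) (L : List (Wr G d))
    (hL : ∀ a ∈ L, ∀ i, a.left i ∈ Set.range f) (i : Fin d) :
    ∃ l : List α, l.length = L.length ∧ L.prod.left i = (l.map f).prod := by
  induction L generalizing i with
  | nil => exact ⟨[], rfl, rfl⟩
  | cons a L ih =>
    obtain ⟨x, hx⟩ := hL a List.mem_cons_self i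
    obtain ⟨l, hlength, hprod⟩ := ih (fun b hb => hL b (List.mem_cons_of_mem a hb)) (a.right⁻¹ i)
    refine ⟨x :: l, congrArg (· + 1) hlength, ?_⟩
    rw [List.prod_cons, mul_left_apply, hprod, List.map_cons, List.prod_cons, hx]

end Wr

/-- The words of length at most `k` in the alphabet `S` that represent the identity of `G`. Only
positive words are meant: inverses of letters do not occur. The set `rels N n` is the case
`S = N n`, `k = 3`. -/
def shortRelators {G : Type*} [Group G] (S : Set G) (k : ℕ) : Set (FreeGroup S) :=
  {w | (∃ l : List S, l.length ≤ k ∧ w = (l.map FreeGroup.of).prod) ∧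
    FreeGroup.lift (fun x : S => (x : G)) w = 1}

section Relabel

variable {G H K L : Type*} [Group G] [Group H] [Group K] [Group L] {d : ℕ}
  (φ : G →* Wr H d) {S : Set G} {T : Set H} (hST : ∀ (x : S) (i : Fin d), (φ x).left i ∈ T)

/-- The element of `K ≀ d` obtained from `φ x` by applying `j : T → K` to its entries, which lie in
`T` when `x ∈ S`. Here `j` is any map of sets; for the inclusion `T → H` this is `φ x` itself, and
for the generators of the cover of `H` it is the prescribed value of the induced homomorphism. -/
def relabelEntries (j : T → K) (x : S) : Wr K d :=
  ⟨fun i => j ⟨(φ x).left i, hST x i⟩, (φ x).right⟩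

theorem map_lift_relabelEntries (f : K →* L) (j : T → K) (w : FreeGroup S) :
    Wr.map f d (FreeGroup.lift (relabelEntries φ hST j) w) =
      FreeGroup.lift (relabelEntries φ hST (f ∘ j)) w := by
  have hcomp : (Wr.map f d).comp (FreeGroup.lift (relabelEntries φ hST j)) =
      FreeGroup.lift (relabelEntries φ hST (f ∘ j)) := by
    ext1 x
    simp only [MonoidHom.comp_apply, FreeGroup.lift_apply_of]
    rfl
  exact DFunLike.congr_fun hcomp w

theorem map_lift_coe_lift_relabelEntries_of (w : FreeGroup S) :
    Wr.map (FreeGroup.lift fun y : T => (y : H)) d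
        (FreeGroup.lift (relabelEntries φ hST FreeGroup.of) w) =
      φ (FreeGroup.lift (fun x : S => (x : G)) w) := by
  have hof : (FreeGroup.lift fun y : T => (y : H)) ∘ FreeGroup.of = fun y : T => (y : H) :=
    funext fun _ => FreeGroup.lift_apply_of
  have hlift : FreeGroup.lift (relabelEntries φ hST fun y : T => (y : H)) =
      φ.comp (FreeGroup.lift fun x : S => (x : G)) := by
    ext1 x
    simp only [MonoidHom.comp_apply, FreeGroup.lift_apply_of]
    rfl
  rw [map_lift_relabelEntries, hof, hlift, MonoidHom.comp_apply]

variable {k : ℕ} {r : FreeGroup S}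

theorem map_lift_coe_lift_relabelEntries_of_eq_one (hr : r ∈ shortRelators S k) :
    Wr.map (FreeGroup.lift fun y : T => (y : H)) d
      (FreeGroup.lift (relabelEntries φ hST FreeGroup.of) r) = 1 := by
  rw [map_lift_coe_lift_relabelEntries_of, hr.2, map_one]

theorem lift_relabelEntries_of_left_mem_shortRelators (hr : r ∈ shortRelators S k) (i : Fin d) :
    (FreeGroup.lift (relabelEntries φ hST FreeGroup.of) r).left i ∈ shortRelators T k := by
  have htrivial := map_lift_coe_lift_relabelEntries_of_eq_one φ hST hr
  refine ⟨?_, congrFun (congrArg SemidirectProduct.left htrivial) i⟩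
  obtain ⟨l, hl, rfl⟩ := hr.1
  have hword : FreeGroup.lift (relabelEntries φ hST FreeGroup.of) (l.map FreeGroup.of).prod =
      (l.map (relabelEntries φ hST FreeGroup.of)).prod := by
    rw [map_list_prod, List.map_map]
    exact congrArg List.prod (List.map_congr_left fun _ _ => FreeGroup.lift_apply_of)
  have hentries : ∀ a ∈ l.map (relabelEntries φ hST FreeGroup.of), ∀ i,
      a.left i ∈ Set.range (FreeGroup.of : T → FreeGroup T) := by
    rintro _ ha i
    obtain ⟨x, -, rfl⟩ := List.mem_map.mp ha
    exact ⟨_, rfl⟩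
  obtain ⟨l', hlength, hprod⟩ := Wr.exists_prod_left_apply_eq FreeGroup.of _ hentries i
  rw [List.length_map] at hlength
  exact ⟨l', hlength.trans_le hl, by rw [hword, hprod]⟩

theorem lift_relabelEntries_presentedGroup_of_eq_one (hr : r ∈ shortRelators S k) :
    FreeGroup.lift
      (relabelEntries φ hST (PresentedGroup.of (rels := shortRelators T k))) r = 1 := by
  have hfactor := map_lift_relabelEntries φ hST (PresentedGroup.mk (shortRelators T k))
    FreeGroup.of r
  have hright : (FreeGroup.lift (relabelEntries φ hST FreeGroup.of) r).right = 1 :=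
    congrArg SemidirectProduct.right (map_lift_coe_lift_relabelEntries_of_eq_one φ hST hr)
  refine hfactor.symm.trans (SemidirectProduct.ext (funext fun i => ?_) hright)
  exact PresentedGroup.one_of_mem (lift_relabelEntries_of_left_mem_shortRelators φ hST hr i)

end Relabel

theorem exists_unique_induced_hom_on_presented_cover_general {G H : Type*} [Group G] [Group H]
    {d : ℕ} (φ : G →* Wr H d) {S : Set G} {T : Set H}
    (hST : ∀ (x : S) (i : Fin d), (φ x).left i ∈ T) (k : ℕ) :
    ∃! φhat : PresentedGroup (shortRelators S k) →* Wr (PresentedGroup (shortRelators T k)) d,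
      ∀ x : S,
        (φhat (PresentedGroup.of x)).right = (φ x).right ∧
        ∀ i : Fin d, (φhat (PresentedGroup.of x)).left i =
          PresentedGroup.of ⟨(φ x).left i, hST x i⟩ := by
  have hrel : ∀ r ∈ shortRelators S k, FreeGroup.lift (relabelEntries φ hST PresentedGroup.of) r =
      (1 : Wr (PresentedGroup (shortRelators T k)) d) :=
    fun _ hr => lift_relabelEntries_presentedGroup_of_eq_one φ hST hr
  refine ⟨PresentedGroup.toGroup hrel, fun x => ?_, fun ψ hψ => PresentedGroup.ext fun x => ?_⟩
  · rw [PresentedGroup.toGroup.of hrel]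
    exact ⟨rfl, fun _ => rfl⟩
  · rw [PresentedGroup.toGroup.of hrel]
    exact SemidirectProduct.ext (funext (hψ x).2) (hψ x).1

/-- Let `(G n, φ n, d n)` be a similar group contracting to the sequence of finite subsets
`(N n)`.  Then for every `n` there is a unique homomorphism `φ̂ n : F n →* F (n+1) ≀ d n`
between the presented covers such that `φ̂ n (ι n x)` has the same permutation part as
`φ n x` and its `i`-th entry is `ι (n+1)` of the `i`-th entry of `φ n x`. -/
theorem exists_unique_induced_hom_on_presented_cover
    {G : ℕ → Type} [∀ n, Group (G n)] (d : ℕ → ℕ)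
    (φ : ∀ n, G n →* Wr (G (n+1)) (d n))
    (N : ∀ n, Set (G n)) (hfin : ∀ n, (N n).Finite)
    (hmem : ∀ (n : ℕ) (x : N n) (i : Fin (d n)), (φ n (x : G n)).left i ∈ N (n+1))
    (hcontr : ∀ (n : ℕ) (g : G n), ∃ M : ℕ, ∀ m ≥ M, ∀ w : Word d n m,
      st φ n m g w ∈ N (n+m)) :
    ∀ n : ℕ, ∃! φhat : FGrp N n →* Wr (FGrp N (n+1)) (d n),
      ∀ x : N n,
        (φhat (iota N n x)).right = (φ n (x : G n)).right ∧
        ∀ i : Fin (d n), (φhat (iota N n x)).left i =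
          iota N (n+1) ⟨(φ n (x : G n)).left i, hmem n x i⟩ := by
  intro n
  exact exists_unique_induced_hom_on_presented_cover_general (φ n) (hmem n) 3
end

section
/- Let (G_n, φ_n, d_n) be a similar group contracting to a sequence of finite subsets (N_n), let F_n be the presented group with generating set N_n and relators all words of length at most 3 in the alphabet N_n that represent the identity of G_n, let ι_n : N_n → F_n be the map of generators, and let φ̂_n : F_n → F_{n+1} ≀ d_{n+1} be the induced homomorphisms (the permutation part of φ̂_n(ι_n x) equals that of φ_n(x) and its entries are the ι_{n+1}-images of the entries of φ_n(x)). Then the similar group (F_n, φ̂_n, d_n) contracts to the sequence of finite subsets (ι_n(N_n) ∪ {1}). -/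
/-!
Say that an element contracts into `S` if it lies in `S` or all its first-level entries contract
into `S`. Let `S` be self-similar. Indices being finite, an element contracts into `S` exactly when
all its sufficiently deep entries lie in `S`, and the contracting elements are closed under products
and inverses as soon as products and inverses of elements of `S` contract. So it remains to treat
`(ι x)⁻¹` and `ι x * ι y`. The entries of `φ̂` at a word of length at most two are words of length
at most two, and these descend in parallel with those of `φ`. Once the inverse of the value of such
a word in `G` has reached some `z ∈ N`, the word followed by `z` is a relator, so that the inverse
of the word in `F` is `ι z`.
-/

theorem Wr.mul_left_apply_s4 {G : Type*} [Group G] {d : ℕ} (a b : Wr G d) (i : Fin d) :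
    (a * b).left i = a.left i * b.left (a.right⁻¹ i) := rfl

theorem Wr.inv_left_apply {G : Type*} [Group G] {d : ℕ} (a : Wr G d) (i : Fin d) :
    a⁻¹.left i = (a.left (a.right i))⁻¹ := rfl

section SimilarGroup

variable {G : ℕ → Type*} [∀ n, Group (G n)] {d : ℕ → ℕ}
  {φ : ∀ n, G n →* Wr (G (n + 1)) (d n)} {S : ∀ n, Set (G n)}

theorem forall_st_succ_iff {n m : ℕ} {g : G n} {P : G (n + m + 1) → Prop} :
    (∀ w : Word d n (m + 1), P (st φ n (m + 1) g w)) ↔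
      ∀ (w : Word d n m) (i : Fin (d (n + m))), P ((φ (n + m) (st φ n m g w)).left i) := by
  refine ⟨fun h w i => ?_, fun h w => h _ _⟩
  let v : Word d n (m + 1) := Fin.snoc (α := fun k : Fin (m + 1) => Fin (d (n + k))) w i
  have hinit : (fun k : Fin m => v k.castSucc) = w :=
    Fin.init_snoc (α := fun k : Fin (m + 1) => Fin (d (n + k))) i w
  have hlast : v (Fin.last m) = i := Fin.snoc_last (α := fun k => Fin (d (n + k))) i w
  have hv : P ((φ (n + m) (st φ n m g fun k => v k.castSucc)).left (v (Fin.last m))) := h v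
  rwa [hinit, hlast] at hv

/-- `st` recurses on the last letter of the multi-index; this splits off the first one. -/
theorem st_succ_mem_of_forall_entry {n m : ℕ} {g : G n}
    (h : ∀ (i : Fin (d n)) (w : Word d (n + 1) m),
      st φ (n + 1) m ((φ n g).left i) w ∈ S (n + 1 + m)) (w : Word d n (m + 1)) :
    st φ n (m + 1) g w ∈ S (n + (m + 1)) := by
  induction m generalizing S with
  | zero => exact h (w 0) fun k => k.elim0
  | succ m ih =>
    let T : ∀ k, Set (G k) := fun k => {x | ∀ i, (φ k x).left i ∈ S (k + 1)}
    have hT (v : Word d n (m + 1)) : st φ n (m + 1) g v ∈ T (n + (m + 1)) :=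
      ih (S := T) (fun i => forall_st_succ_iff.1 (h i)) v
    exact hT _ _

/-- The family `S` is closed under passing to entries, as the nucleus of a contracting similar group
is required to be. -/
def IsSelfSimilar (φ : ∀ n, G n →* Wr (G (n + 1)) (d n)) (S : ∀ n, Set (G n)) : Prop :=
  ∀ n, ∀ x ∈ S n, ∀ i, (φ n x).left i ∈ S (n + 1)

theorem IsSelfSimilar.st_mem (hS : IsSelfSimilar φ S) {n : ℕ} {x : G n} (hx : x ∈ S n) (m : ℕ)
    (w : Word d n m) : st φ n m x w ∈ S (n + m) := by
  induction m with
  | zero => exact hx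
  | succ m ih => exact hS _ _ (ih _) _

/-- Descending from `g` to its entries reaches `S` along every multi-index. For self-similar `S`
this says that all sufficiently deep entries of `g` lie in `S`; the inductive form avoids carrying
a depth along. -/
inductive ContractsInto (φ : ∀ n, G n →* Wr (G (n + 1)) (d n)) (S : ∀ n, Set (G n)) :
    ∀ {n : ℕ}, G n → Prop
  | of_mem {n : ℕ} {g : G n} (hg : g ∈ S n) : ContractsInto φ S g
  | of_entries {n : ℕ} {g : G n} (hg : ∀ i, ContractsInto φ S ((φ n g).left i)) :
    ContractsInto φ S g

namespace ContractsInto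

theorem of_forall_st {n m : ℕ} {g : G n} (h : ∀ w : Word d n m, ContractsInto φ S (st φ n m g w)) :
    ContractsInto φ S g := by
  induction m with
  | zero => exact h fun k => k.elim0
  | succ m ih => exact ih fun w => of_entries (forall_st_succ_iff.1 h w)

theorem eventually_st_mem (hS : IsSelfSimilar φ S) {n : ℕ} {g : G n} (hg : ContractsInto φ S g) :
    ∃ M, ∀ m ≥ M, ∀ w : Word d n m, st φ n m g w ∈ S (n + m) := by
  induction hg with
  | of_mem hg => exact ⟨0, fun m _ => hS.st_mem hg m⟩
  | of_entries _ ih =>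
    choose M hM using ih
    refine ⟨Finset.univ.sup M + 1, fun m hm => ?_⟩
    obtain ⟨m, rfl⟩ := Nat.exists_eq_add_of_le' (Nat.one_le_of_lt hm)
    have hMm (i) : M i ≤ m :=
      (Finset.le_sup (Finset.mem_univ i)).trans (Nat.le_of_add_le_add_right hm)
    exact st_succ_mem_of_forall_entry fun i => hM i m (hMm i)

theorem entry (hS : IsSelfSimilar φ S) {n : ℕ} {g : G n} (hg : ContractsInto φ S g)
    (i : Fin (d n)) : ContractsInto φ S ((φ n g).left i) := by
  cases hg with
  | of_mem hg => exact of_mem (hS n g hg i)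
  | of_entries hg => exact hg i

theorem inv (hinv : ∀ n, ∀ x ∈ S n, ContractsInto φ S x⁻¹) {n : ℕ} {g : G n}
    (hg : ContractsInto φ S g) : ContractsInto φ S g⁻¹ := by
  induction hg with
  | of_mem hg => exact hinv _ _ hg
  | of_entries _ ih =>
    refine of_entries fun i => ?_
    rw [map_inv, Wr.inv_left_apply]
    exact ih _

theorem mul (hS : IsSelfSimilar φ S)
    (hmul : ∀ n, ∀ x ∈ S n, ∀ y ∈ S n, ContractsInto φ S (x * y)) {n : ℕ} {g h : G n}
    (hg : ContractsInto φ S g) (hh : ContractsInto φ S h) : ContractsInto φ S (g * h) := by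
  induction hg with
  | of_mem hg =>
    induction hh with
    | of_mem hh => exact hmul _ _ hg _ hh
    | of_entries _ ih =>
      refine of_entries fun i => ?_
      rw [map_mul, Wr.mul_left_apply_s4]
      exact ih _ (hS _ _ hg i)
  | of_entries _ ih =>
    refine of_entries fun i => ?_
    rw [map_mul, Wr.mul_left_apply_s4]
    exact ih i (hh.entry hS _)

theorem of_mem_closure (hS : IsSelfSimilar φ S)
    (hinv : ∀ n, ∀ x ∈ S n, ContractsInto φ S x⁻¹)
    (hmul : ∀ n, ∀ x ∈ S n, ∀ y ∈ S n, ContractsInto φ S (x * y)) {n : ℕ}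
    (hone : (1 : G n) ∈ S n) {g : G n} (hg : g ∈ Subgroup.closure (S n)) :
    ContractsInto φ S g := by
  induction hg using Subgroup.closure_induction with
  | mem x hx => exact of_mem hx
  | one => exact of_mem hone
  | mul x y _ _ hx hy => exact mul hS hmul hx hy
  | inv x _ hx => exact inv hinv hx

end ContractsInto

end SimilarGroup

section Cover

variable {G : ℕ → Type*} [∀ n, Group (G n)] {d : ℕ → ℕ} {N : ∀ n, Set (G n)}

/-- The candidate nucleus `ι n '' N n ∪ {1}` of the cover. -/
def coverNucleus (N : ∀ n, Set (G n)) (n : ℕ) : Set (FGrp N n) :=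
  Set.range (iota N n) ∪ {1}

theorem finite_coverNucleus {n : ℕ} (hN : (N n).Finite) : (coverNucleus N n).Finite :=
  have := hN.to_subtype
  (Set.finite_range _).union (Set.finite_singleton _)

theorem closure_coverNucleus (n : ℕ) : Subgroup.closure (coverNucleus N n) = ⊤ :=
  top_unique <| (PresentedGroup.closure_range_of (rels N n)).ge.trans <|
    Subgroup.closure_mono Set.subset_union_left

theorem prod_map_iota_eq_one {n : ℕ} {l : List (N n)} (hlen : l.length ≤ 3)
    (hl : (l.map (↑)).prod = (1 : G n)) : (l.map (iota N n)).prod = 1 := by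
  have hrel : (l.map FreeGroup.of).prod ∈ rels N n := by
    refine ⟨⟨l, hlen, rfl⟩, ?_⟩
    simpa [map_list_prod, Function.comp_def] using hl
  have hone := PresentedGroup.one_of_mem hrel
  rwa [map_list_prod, List.map_map] at hone

theorem inv_prod_map_iota_mem_coverNucleus {n : ℕ} {l : List (N n)} (hlen : l.length ≤ 2)
    (hl : ((l.map (↑)).prod : G n)⁻¹ ∈ N n) : (l.map (iota N n)).prod⁻¹ ∈ coverNucleus N n := by
  let z : N n := ⟨_, hl⟩
  have hz : ((l ++ [z]).map (iota N n)).prod = 1 :=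
    prod_map_iota_eq_one (by simpa [Nat.lt_succ_iff] using hlen) (by simp [z])
  rw [List.map_append, List.prod_append, List.map_singleton, List.prod_singleton] at hz
  exact Or.inl ⟨z, (inv_eq_of_mul_eq_one_right hz).symm⟩

/-- The homomorphisms `φhat` on the presented covers are induced by `φ`. That the entries of `φ n x`
lie in `N (n + 1)` is part of the definition. -/
def IsInducedOnCover (φ : ∀ n, G n →* Wr (G (n + 1)) (d n))
    (φhat : ∀ n, FGrp N n →* Wr (FGrp N (n + 1)) (d n)) : Prop :=
  ∀ (n : ℕ) (x : N n), (φhat n (iota N n x)).right = (φ n x).right ∧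
    ∀ i, ∃ h : (φ n x).left i ∈ N (n + 1),
      (φhat n (iota N n x)).left i = iota N (n + 1) ⟨(φ n x).left i, h⟩

namespace IsInducedOnCover

variable {φ : ∀ n, G n →* Wr (G (n + 1)) (d n)}
  {φhat : ∀ n, FGrp N n →* Wr (FGrp N (n + 1)) (d n)}

theorem isSelfSimilar_coverNucleus (hφ : IsInducedOnCover φ φhat) :
    IsSelfSimilar φhat (coverNucleus N) := by
  rintro n _ (⟨x, rfl⟩ | rfl) i
  · obtain ⟨_, hi⟩ := (hφ n x).2 i
    exact Or.inl ⟨_, hi.symm⟩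
  · rw [map_one]
    exact Or.inr rfl

theorem right_prod_map_iota (hφ : IsInducedOnCover φ φhat) {n : ℕ} (l : List (N n)) :
    (φhat n (l.map (iota N n)).prod).right = (φ n (l.map (↑)).prod).right := by
  induction l with
  | nil => simp
  | cons x l ih =>
    simp only [List.map_cons, List.prod_cons, map_mul, SemidirectProduct.mul_right, ih, (hφ n x).1]

theorem exists_list_entry_eq_prod (hφ : IsInducedOnCover φ φhat) {n : ℕ} (l : List (N n))
    (i : Fin (d n)) : ∃ l' : List (N (n + 1)), l'.length = l.length ∧
      (φ n (l.map (↑)).prod).left i = (l'.map (↑)).prod ∧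
      (φhat n (l.map (iota N n)).prod).left i = (l'.map (iota N (n + 1))).prod := by
  induction l generalizing i with
  | nil => exact ⟨[], by simp⟩
  | cons x l ih =>
    obtain ⟨hright, hleft⟩ := hφ n x
    obtain ⟨hmem, hx⟩ := hleft i
    obtain ⟨l', hlen, hl, hlhat⟩ := ih ((φ n x).right⁻¹ i)
    refine ⟨⟨_, hmem⟩ :: l', by simp only [List.length_cons, hlen], ?_, ?_⟩
    · simp only [List.map_cons, List.prod_cons, map_mul, Wr.mul_left_apply_s4, hl]
    · simp only [List.map_cons, List.prod_cons, map_mul, Wr.mul_left_apply_s4, hx, hright, hlhat]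

theorem contractsInto_inv_prod (hφ : IsInducedOnCover φ φhat) {n : ℕ} {l : List (N n)}
    (hlen : l.length ≤ 2) (hl : ContractsInto φ N ((l.map (↑)).prod : G n)⁻¹) :
    ContractsInto φhat (coverNucleus N) (l.map (iota N n)).prod⁻¹ := by
  generalize hg : ((l.map (↑)).prod : G n)⁻¹ = g at hl
  induction hl with
  | of_mem hmem => exact .of_mem (inv_prod_map_iota_mem_coverNucleus hlen (hg ▸ hmem))
  | @of_entries n g _ ih =>
    refine .of_entries fun i => ?_
    obtain ⟨l', hlen', hl', hlhat'⟩ :=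
      hφ.exists_list_entry_eq_prod l ((φ n (l.map (↑)).prod).right i)
    rw [map_inv, Wr.inv_left_apply, hφ.right_prod_map_iota, hlhat']
    refine ih i (hlen'.trans_le hlen) ?_
    rw [← hg, map_inv, Wr.inv_left_apply, hl']

theorem contractsInto_inv (hφ : IsInducedOnCover φ φhat)
    (hinv : ∀ n, ∀ x ∈ N n, ContractsInto φ N x⁻¹) (n : ℕ) :
    ∀ a ∈ coverNucleus N n, ContractsInto φhat (coverNucleus N) a⁻¹ := by
  rintro _ (⟨x, rfl⟩ | rfl)
  · simpa using hφ.contractsInto_inv_prod (l := [x]) (by simp) (by simpa using hinv n x x.2)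
  · exact .of_mem (Or.inr inv_one)

theorem contractsInto_mul (hφ : IsInducedOnCover φ φhat)
    (hinv : ∀ n, ∀ x ∈ N n, ContractsInto φ N x⁻¹)
    (hmul : ∀ n, ∀ x ∈ N n, ∀ y ∈ N n, ContractsInto φ N (x * y)) (n : ℕ) :
    ∀ a ∈ coverNucleus N n, ∀ b ∈ coverNucleus N n,
      ContractsInto φhat (coverNucleus N) (a * b) := by
  rintro _ (⟨x, rfl⟩ | rfl) b hb
  · obtain ⟨y, rfl⟩ | rfl := hb
    · have hxy : ContractsInto φ N ((x : G n) * (y : G n))⁻¹ := (hmul n x x.2 y y.2).inv hinv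
      have hxyhat : ContractsInto φhat (coverNucleus N) (iota N n x * iota N n y)⁻¹ := by
        simpa using hφ.contractsInto_inv_prod (l := [x, y]) (by simp) (by simpa using hxy)
      simpa using hxyhat.inv (hφ.contractsInto_inv hinv)
    · rw [mul_one]
      exact .of_mem (Or.inl ⟨x, rfl⟩)
  · rw [one_mul]
    exact .of_mem hb

theorem contractsInto (hφ : IsInducedOnCover φ φhat)
    (hinv : ∀ n, ∀ x ∈ N n, ContractsInto φ N x⁻¹)
    (hmul : ∀ n, ∀ x ∈ N n, ∀ y ∈ N n, ContractsInto φ N (x * y)) {n : ℕ} (a : FGrp N n) :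
    ContractsInto φhat (coverNucleus N) a :=
  .of_mem_closure hφ.isSelfSimilar_coverNucleus (hφ.contractsInto_inv hinv)
    (hφ.contractsInto_mul hinv hmul) (Or.inr rfl)
    (by simp only [closure_coverNucleus, Subgroup.mem_top])

end IsInducedOnCover

end Cover

theorem presented_cover_contracts_general
    {G : ℕ → Type*} [∀ n, Group (G n)] (d : ℕ → ℕ)
    (φ : ∀ n, G n →* Wr (G (n + 1)) (d n)) (N : ∀ n, Set (G n))
    (hmem : ∀ (n : ℕ) (x : N n) (i : Fin (d n)), (φ n (x : G n)).left i ∈ N (n + 1))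
    (hinv : ∀ n, ∀ x ∈ N n, ∃ m, ∀ w : Word d n m, st φ n m x⁻¹ w ∈ N (n + m))
    (hmul : ∀ n, ∀ x ∈ N n, ∀ y ∈ N n,
      ∃ m, ∀ w : Word d n m, st φ n m (x * y) w ∈ N (n + m))
    (φhat : ∀ n, FGrp N n →* Wr (FGrp N (n + 1)) (d n))
    (hφhat : ∀ (n : ℕ) (x : N n),
      (φhat n (iota N n x)).right = (φ n (x : G n)).right ∧
      ∀ i : Fin (d n), (φhat n (iota N n x)).left i =
        iota N (n + 1) ⟨(φ n (x : G n)).left i, hmem n x i⟩) :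
    (∀ n : ℕ, ∀ x ∈ (Set.range (iota N n) ∪ {1} : Set (FGrp N n)), ∀ i : Fin (d n),
      (φhat n x).left i ∈ (Set.range (iota N (n + 1)) ∪ {1} : Set (FGrp N (n + 1)))) ∧
    (∀ (n : ℕ) (g : FGrp N n), ∃ M : ℕ, ∀ m ≥ M, ∀ w : Word d n m,
      st φhat n m g w ∈ (Set.range (iota N (n + m)) ∪ {1} : Set (FGrp N (n + m)))) := by
  have hφ : IsInducedOnCover φ φhat := fun n x =>
    ⟨(hφhat n x).1, fun i => ⟨hmem n x i, (hφhat n x).2 i⟩⟩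
  have contracts_of_exists {n : ℕ} {g : G n}
      (hg : ∃ m, ∀ w : Word d n m, st φ n m g w ∈ N (n + m)) : ContractsInto φ N g :=
    hg.elim fun _ hm => .of_forall_st fun w => .of_mem (hm w)
  refine ⟨hφ.isSelfSimilar_coverNucleus, fun n g => ?_⟩
  have hg : ContractsInto φhat (coverNucleus N) g :=
    hφ.contractsInto (fun n x hx => contracts_of_exists (hinv n x hx))
      (fun n x hx y hy => contracts_of_exists (hmul n x hx y hy)) g
  exact hg.eventually_st_mem hφ.isSelfSimilar_coverNucleus

/-- Lemma 2 of the paper: if the similar group `(G n, φ n, d n)` contracts to the sequence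
of finite subsets `(N n)`, and `φ̂ n : F n →* F (n+1) ≀ d n` are the induced homomorphisms
on the presented covers, then the similar group `(F n, φ̂ n, d n)` contracts to the sequence
of finite subsets `ι n '' N n ∪ {1}`. -/
theorem presented_cover_contracts
    {G : ℕ → Type} [∀ n, Group (G n)] (d : ℕ → ℕ)
    (φ : ∀ n, G n →* Wr (G (n+1)) (d n))
    (N : ∀ n, Set (G n)) (hfin : ∀ n, (N n).Finite)
    (hmem : ∀ (n : ℕ) (x : N n) (i : Fin (d n)), (φ n (x : G n)).left i ∈ N (n+1))
    (hcontr : ∀ (n : ℕ) (g : G n), ∃ M : ℕ, ∀ m ≥ M, ∀ w : Word d n m,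
      st φ n m g w ∈ N (n+m))
    (φhat : ∀ n, FGrp N n →* Wr (FGrp N (n+1)) (d n))
    (hφhat : ∀ (n : ℕ) (x : N n),
      (φhat n (iota N n x)).right = (φ n (x : G n)).right ∧
      ∀ i : Fin (d n), (φhat n (iota N n x)).left i =
        iota N (n+1) ⟨(φ n (x : G n)).left i, hmem n x i⟩) :
    -- the sets `ι n '' N n ∪ {1}` are finite,
    (∀ n : ℕ, (Set.range (iota N n) ∪ {1} : Set (FGrp N n)).Finite) ∧
    -- entries of `φ̂ n` of nucleus elements stay in the nucleus,
    (∀ n : ℕ, ∀ x ∈ (Set.range (iota N n) ∪ {1} : Set (FGrp N n)), ∀ i : Fin (d n),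
      (φhat n x).left i ∈ (Set.range (iota N (n+1)) ∪ {1} : Set (FGrp N (n+1)))) ∧
    -- and `(F n, φ̂ n)` contracts to `(ι n '' N n ∪ {1})`.
    (∀ (n : ℕ) (g : FGrp N n), ∃ M : ℕ, ∀ m ≥ M, ∀ w : Word d n m,
      st φhat n m g w ∈ (Set.range (iota N (n+m)) ∪ {1} : Set (FGrp N (n+m)))) := by
  have exists_depth (n : ℕ) (g : G n) : ∃ m, ∀ w : Word d n m, st φ n m g w ∈ N (n + m) :=
    (hcontr n g).imp fun M hM => hM M le_rfl
  exact ⟨fun n => finite_coverNucleus (hfin n), presented_cover_contracts_general d φ N hmem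
    (fun n x _ => exists_depth n x⁻¹) (fun n x _ y _ => exists_depth n (x * y)) φhat hφhat⟩
end

section
/- Let A be a finite group and let G be the group, under pointwise multiplication, of functions f : ℤ → A with finite support (f n = 1 for all but finitely many n). Define ψ : G → G ≀ 2 by letting ψ(f) have trivial permutation part and entries f₀, f₁ given by f₀(n) = f(2n) and f₁(n) = f(2n − 1). Then ψ is a group homomorphism, and the self-similar group (G, ψ) is contracting with nucleus N = {f ∈ G : f n = 1 for all n ∉ {0, 1}}: for every f ∈ G and all sufficiently large n, every entry of ψ^n(f) lies in N. -/
/-- The group of finitely supported functions `ℤ → A` under pointwise multiplication,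
as a subgroup of `ℤ → A`. -/
def finSuppSubgroup (A : Type*) [Group A] : Subgroup (ℤ → A) where
  carrier := {f | (Function.mulSupport f).Finite}
  one_mem' := by
    simp [Function.mulSupport_one]
  mul_mem' := fun hf hg => (hf.union hg).subset (Function.mulSupport_mul _ _)
  inv_mem' := fun hf => by simpa [Function.mulSupport_inv] using hf

/-- The self-similarity structure `ψ : G → G ≀ 2` on the group `G` of finitely supported
functions `ℤ → A`: `ψ f` has trivial permutation part and entries `f₀, f₁` with
`f₀ n = f (2n)` and `f₁ n = f (2n - 1)`. -/
def psiMap (A : Type*) [Group A] (f : finSuppSubgroup A) :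
    Wr (finSuppSubgroup A) 2 :=
  SemidirectProduct.mk
    ![⟨fun n => (f : ℤ → A) (2 * n), by
        have h : Function.mulSupport (fun n : ℤ => (f : ℤ → A) (2 * n)) =
            (fun n : ℤ => 2 * n) ⁻¹' Function.mulSupport (f : ℤ → A) := rfl
        show (Function.mulSupport fun n : ℤ => (f : ℤ → A) (2 * n)).Finite
        rw [h]
        exact Set.Finite.preimage (fun a _ b _ hab => by omega) f.2⟩,
      ⟨fun n => (f : ℤ → A) (2 * n - 1), by
        have h : Function.mulSupport (fun n : ℤ => (f : ℤ → A) (2 * n - 1)) =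
            (fun n : ℤ => 2 * n - 1) ⁻¹' Function.mulSupport (f : ℤ → A) := rfl
        show (Function.mulSupport fun n : ℤ => (f : ℤ → A) (2 * n - 1)).Finite
        rw [h]
        exact Set.Finite.preimage (fun a _ b _ hab => by omega) f.2⟩]
    1

/-- The entry of `ψ^m (g)` at the multi-index `w : Fin m → Fin d`, for a self-similarity
map `ψ : G → G ≀ d`. -/
def sstF {G : Type*} [Group G] {d : ℕ} (ψ : G → Wr G d) :
    (m : ℕ) → G → (Fin m → Fin d) → G
  | 0, g, _ => g
  | m+1, g, w => (ψ (sstF ψ m g fun k => w k.castSucc)).left (w (Fin.last m))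

/-!
Unfolding `ψ` along a word `w` of length `m` gives the explicit formula
`n ↦ f (2 ^ m * n - j)` for the corresponding entry of `ψ^m(f)`, where `0 ≤ j < 2 ^ m` is the number
whose binary digits are the letters of `w`, least significant first. For `n ∉ {0, 1}` the argument
`2 ^ m * n - j` has absolute value at least `2 ^ m`, so it lies outside the support of `f` as soon
as `m` is large.
-/

theorem finite_setOf_forall_notMem_eq {ι : Type*} {π : ι → Type*} [∀ i, Finite (π i)]
    {s : Set ι} (hs : s.Finite) (g : ∀ i, π i) : {f : ∀ i, π i | ∀ i ∉ s, f i = g i}.Finite := by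
  have : Finite s := hs
  refine Set.Finite.of_injOn (Set.mapsTo_univ s.domRestrict _) ?_ Set.finite_univ
  intro f hf f' hf' hrestrict
  funext i
  by_cases hi : i ∈ s
  · exact congrFun hrestrict ⟨i, hi⟩
  · exact (hf i hi).trans (hf' i hi).symm

theorem le_abs_mul_sub_of_notMem_zero_one {b j n : ℤ} (hj : 0 ≤ j) (hjb : j < b)
    (hn : n ∉ ({0, 1} : Set ℤ)) : b ≤ |b * n - j| := by
  have hn' : n ≤ -1 ∨ 2 ≤ n := by
    simp only [Set.mem_insert_iff, Set.mem_singleton_iff] at hn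
    omega
  rcases hn' with hneg | hpos
  · exact le_abs.mpr (Or.inr (by nlinarith))
  · exact le_abs.mpr (Or.inl (by nlinarith))

section FinSupp

variable {A : Type*} [Group A]

theorem exists_forall_eq_one_of_le_abs (f : finSuppSubgroup A) :
    ∃ M : ℕ, ∀ x : ℤ, M ≤ |x| → (f : ℤ → A) x = 1 := by
  have hsupp : (Function.mulSupport (f : ℤ → A)).Finite := f.2
  obtain ⟨b, hb⟩ := (hsupp.image abs).bddAbove
  obtain ⟨M, hM⟩ := exists_nat_gt b
  refine ⟨M, fun x hx => ?_⟩
  by_contra hfx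
  exact (hM.trans_le hx).not_ge (hb (Set.mem_image_of_mem abs hfx))

theorem psiMap_left_apply (f : finSuppSubgroup A) (i : Fin 2) (n : ℤ) :
    ((psiMap A f).left i : ℤ → A) n = (f : ℤ → A) (2 * n - (i : ℕ)) := by
  fin_cases i <;> simp [psiMap]

theorem psiMap_mul (f g : finSuppSubgroup A) : psiMap A (f * g) = psiMap A f * psiMap A g := by
  refine SemidirectProduct.ext ?_ (mul_one 1).symm
  have permAut_right : permAut (finSuppSubgroup A) 2 (psiMap A f).right = 1 := map_one _
  ext i n
  simp [permAut_right, psiMap_left_apply]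

theorem sstF_psiMap_apply (f : finSuppSubgroup A) {m : ℕ} (w : Fin m → Fin 2) (n : ℤ) :
    ((sstF (psiMap A) m f w : finSuppSubgroup A) : ℤ → A) n =
      (f : ℤ → A) (2 ^ m * n - (finFunctionFinEquiv w : ℕ)) := by
  induction m generalizing n with
  | zero => simp [sstF]
  | succ m ih =>
    have index_succ : ((finFunctionFinEquiv w : ℕ) : ℤ) =
        (finFunctionFinEquiv (fun k => w k.castSucc) : ℕ) + (w (Fin.last m) : ℕ) * 2 ^ m := by
      simp [Fin.sum_univ_castSucc]
    rw [sstF, psiMap_left_apply, ih, index_succ]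
    ring_nf

theorem sstF_psiMap_apply_eq_one {f : finSuppSubgroup A} {m : ℕ}
    (hf : ∀ x : ℤ, 2 ^ m ≤ |x| → (f : ℤ → A) x = 1) (w : Fin m → Fin 2) {n : ℤ}
    (hn : n ∉ ({0, 1} : Set ℤ)) :
    ((sstF (psiMap A) m f w : finSuppSubgroup A) : ℤ → A) n = 1 := by
  rw [sstF_psiMap_apply]
  have index_lt : ((finFunctionFinEquiv w : ℕ) : ℤ) < 2 ^ m :=
    mod_cast (finFunctionFinEquiv w).isLt
  exact hf _ (le_abs_mul_sub_of_notMem_zero_one (Int.natCast_nonneg _) index_lt hn)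

end FinSupp

/-- Let `A` be a finite group and `G` the group of finitely supported functions `ℤ → A`.
The map `ψ : G → G ≀ 2` with trivial permutation part and entries `f₀ n = f (2n)`,
`f₁ n = f (2n - 1)` is a group homomorphism, and the self-similar group `(G, ψ)` is
contracting with nucleus `N = {f : f n = 1 for all n ∉ {0, 1}}`. -/
theorem finitely_supported_functions_contracting
    (A : Type*) [Group A] [Finite A] :
    (∀ f g : finSuppSubgroup A, psiMap A (f * g) = psiMap A f * psiMap A g) ∧
    ({f : finSuppSubgroup A | ∀ n : ℤ, n ∉ ({0, 1} : Set ℤ) → (f : ℤ → A) n = 1}.Finite) ∧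
    (∀ f : finSuppSubgroup A, ∃ M : ℕ, ∀ m ≥ M, ∀ w : Fin m → Fin 2,
      sstF (psiMap A) m f w ∈
        {f : finSuppSubgroup A | ∀ n : ℤ, n ∉ ({0, 1} : Set ℤ) → (f : ℤ → A) n = 1}) := by
  refine ⟨psiMap_mul, ?_, fun f => ?_⟩
  · exact (finite_setOf_forall_notMem_eq (Set.toFinite {0, 1}) (1 : ℤ → A)).preimage
      Subtype.val_injective.injOn
  · obtain ⟨M, hM⟩ := exists_forall_eq_one_of_le_abs f
    refine ⟨M, fun m hm w n hn => sstF_psiMap_apply_eq_one (fun x hx => hM x ?_) w hn⟩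
    calc (M : ℤ) ≤ m := mod_cast hm
      _ ≤ 2 ^ m := mod_cast Nat.lt_two_pow_self.le
      _ ≤ |x| := hx
end

section
/- Let (G_n, φ_n, d_n) be a similar group in which every group G_n is countable. Then there exists a sequence of finite subsets N_n ⊆ G_n such that: for every x ∈ N_n, every entry of φ_n(x) lies in N_{n+1}; and for every n and every g ∈ G_n, for all sufficiently large m every entry of φ_n^m(g) lies in N_{n+m}. That is, the similar group contracts to (N_n). -/
/-!
Put all the groups together into the countable graded set `Σ n, G n`, with an arrow from `x` to each
entry of `φ_n(x)`. Arrows raise the level by one and each vertex has finitely many successors, so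
every vertex has only finitely many descendants at a given level. Number the vertices by an
injection `e` into `ℕ` and let `N_n` consist of the level-`n` descendants of the vertices `a` with
`e a ≤ n`. These sets are finite and closed under taking entries, and the descendants of `a` belong
to them from level `e a` on.
-/

open Relation

section GradedRelation

variable {α : Type*} {r : α → α → Prop} {rank : α → ℕ}

theorem finite_setOf_reflTransGen_rank_lt (hr : ∀ a, {b | r a b}.Finite)
    (hrank : ∀ a b, r a b → rank a < rank b) (a : α) (n : ℕ) :
    {b | ReflTransGen r a b ∧ rank b < n}.Finite := by
  induction n with
  | zero => simp
  | succ n ih =>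
    refine ((Set.finite_singleton a).union (ih.biUnion fun c _ => hr c)).subset ?_
    rintro b ⟨hab, hb⟩
    rcases hab.cases_tail with rfl | ⟨c, hac, hcb⟩
    · exact Or.inl rfl
    · have hc : rank c < n := (hrank c b hcb).trans_le (Nat.le_of_lt_succ hb)
      exact Or.inr (Set.mem_biUnion ⟨hac, hc⟩ hcb)

/-- The set to which a graded relation contracts: `b` belongs to it if it is reachable from some
`a` whose index `e a` in a chosen enumeration is at most the rank of `b`. -/
def contractingSet (r : α → α → Prop) (rank e : α → ℕ) : Set α :=
  {b | ∃ a, e a ≤ rank b ∧ ReflTransGen r a b}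

variable {e : α → ℕ}

theorem finite_contractingSet_rank_eq (hr : ∀ a, {b | r a b}.Finite)
    (hrank : ∀ a b, r a b → rank a < rank b) (he : ∀ n, {a | e a ≤ n}.Finite) (n : ℕ) :
    {b ∈ contractingSet r rank e | rank b = n}.Finite := by
  refine ((he n).biUnion fun a _ =>
    finite_setOf_reflTransGen_rank_lt hr hrank a (n + 1)).subset ?_
  rintro b ⟨⟨a, ha, hab⟩, rfl⟩
  exact Set.mem_biUnion ha ⟨hab, Nat.lt_succ_self _⟩

theorem mem_contractingSet_of_rel (hrank : ∀ a b, r a b → rank a ≤ rank b) {b c : α}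
    (hb : b ∈ contractingSet r rank e) (hbc : r b c) : c ∈ contractingSet r rank e :=
  let ⟨a, ha, hab⟩ := hb
  ⟨a, ha.trans (hrank b c hbc), hab.tail hbc⟩

end GradedRelation

section Levels

variable {X : ℕ → Type*} {S : ∀ n, X n → Set (X (n + 1))}

/-- The arrows of the graded graph on `Σ n, X n` in which `x : X n` has successor set `S n x`. -/
inductive LevelStep (S : ∀ n, X n → Set (X (n + 1))) : (Σ n, X n) → (Σ n, X n) → Prop
  | step {n : ℕ} {x : X n} {y : X (n + 1)} (h : y ∈ S n x) : LevelStep S ⟨n, x⟩ ⟨n + 1, y⟩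

theorem LevelStep.fst_lt {a b : Σ n, X n} (h : LevelStep S a b) : a.1 < b.1 := by
  cases h
  exact Nat.lt_succ_self _

theorem LevelStep.finite_setOf (hS : ∀ n x, (S n x).Finite) (a : Σ n, X n) :
    {b | LevelStep S a b}.Finite := by
  refine ((hS a.1 a.2).image (Sigma.mk (a.1 + 1))).subset ?_
  rintro _ ⟨hy⟩
  exact Set.mem_image_of_mem _ hy

theorem countable_similar_group_contracts_general [∀ n, Countable (X n)]
    (hS : ∀ n x, (S n x).Finite) :
    ∃ N : ∀ n, Set (X n),
      (∀ n, (N n).Finite) ∧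
      (∀ n, ∀ x ∈ N n, S n x ⊆ N (n + 1)) ∧
      (∀ n (x : X n), ∃ M : ℕ, ∀ m ≥ M, ∀ y : X m,
        ReflTransGen (LevelStep S) ⟨n, x⟩ ⟨m, y⟩ → y ∈ N m) := by
  obtain ⟨e, he⟩ := exists_injective_nat (Σ n, X n)
  have finite_index_le (n : ℕ) : {a | e a ≤ n}.Finite := (Set.finite_Iic n).preimage he.injOn
  let C := contractingSet (LevelStep S) Sigma.fst e
  refine ⟨fun n => Sigma.mk n ⁻¹' C, fun n => ?finite, fun n x hx y hy => ?closed,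
    fun n x => ⟨e ⟨n, x⟩, fun m hm y hxy => ⟨⟨n, x⟩, hm, hxy⟩⟩⟩
  case finite =>
    have hC : {b ∈ C | b.1 = n}.Finite :=
      finite_contractingSet_rank_eq (LevelStep.finite_setOf hS) (fun _ _ => LevelStep.fst_lt)
        finite_index_le n
    exact (hC.preimage sigma_mk_injective.injOn).subset fun x hx => ⟨hx, rfl⟩
  case closed =>
    exact mem_contractingSet_of_rel (fun _ _ h => h.fst_lt.le) hx (.step hy)

end Levels

theorem reflTransGen_levelStep_st {G : ℕ → Type*} [∀ n, Group (G n)] {d : ℕ → ℕ}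
    (φ : ∀ n, G n →* Wr (G (n + 1)) (d n)) (n m : ℕ) (g : G n) (w : Word d n m) :
    ReflTransGen (LevelStep fun n x => Set.range (φ n x).left) ⟨n, g⟩ ⟨n + m, st φ n m g w⟩ := by
  induction m with
  | zero => exact .refl
  | succ m ih => exact (ih fun k => w k.castSucc).tail (.step (Set.mem_range_self _))

/-- Every similar group all of whose groups are countable contracts to some sequence of
finite subsets. -/
theorem countable_similar_group_contracts
    {G : ℕ → Type} [∀ n, Group (G n)] [∀ n, Countable (G n)] (d : ℕ → ℕ)
    (φ : ∀ n, G n →* Wr (G (n+1)) (d n)) :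
    ∃ N : ∀ n, Set (G n),
      (∀ n, (N n).Finite) ∧
      (∀ n : ℕ, ∀ x ∈ N n, ∀ i : Fin (d n), (φ n x).left i ∈ N (n+1)) ∧
      (∀ (n : ℕ) (g : G n), ∃ M : ℕ, ∀ m ≥ M, ∀ w : Word d n m,
        st φ n m g w ∈ N (n+m)) := by
  obtain ⟨N, finite, closed, absorbing⟩ := countable_similar_group_contracts_general
    fun n x => Set.finite_range (φ n x).left
  exact ⟨N, finite, fun n x hx i => closed n x hx (Set.mem_range_self i), fun n g =>
    (absorbing n g).imp fun M hM m hm w =>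
      hM (n + m) (hm.trans (Nat.le_add_left m n)) _ (reflTransGen_levelStep_st φ n m g w)⟩
end

section
/- Let F be the presented group with generators a, b, c, d and relators a², b², c², d², bcd, and let φ : F → F ≀ 2 be the homomorphism determined by φ(a) = ⟨1, 1⟩σ (σ the transposition of the two coordinates), φ(b) = ⟨a, c⟩, φ(c) = ⟨a, d⟩, φ(d) = ⟨1, b⟩ (the last three with trivial permutation part). Then the self-similar group (F, φ) is contracting with nucleus the image of {1, a, b, c, d} in F: for every g ∈ F, for all sufficiently large n, every entry of φ^n(g) lies in the image of {1, a, b, c, d}. -/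
/-- The four generators `a, b, c, d` of the Grigorchuk cover. -/
inductive GrigGen : Type
  | a | b | c | d
  deriving DecidableEq

open GrigGen in
/-- The relators `a², b², c², d², bcd`. -/
def grigRels : Set (FreeGroup GrigGen) :=
  {FreeGroup.of a ^ 2, FreeGroup.of b ^ 2, FreeGroup.of c ^ 2, FreeGroup.of d ^ 2,
    FreeGroup.of b * FreeGroup.of c * FreeGroup.of d}

/-- The presented group `F = ⟨a,b,c,d ∣ a², b², c², d², bcd⟩ ≅ C₂ * (C₂ × C₂)`. -/
abbrev GrigF : Type := PresentedGroup grigRels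

open GrigGen in

/-- The entry (state) of `φ^m (g)` at the multi-index `w : Fin m → Fin d`, for a
self-similarity structure `φ : G →* G ≀ d`. -/
def sst {G : Type*} [Group G] {d : ℕ} (φ : G →* Wr G d) :
    (m : ℕ) → G → (Fin m → Fin d) → G
  | 0, g, _ => g
  | m+1, g, w => (φ (sst φ m g fun k => w k.castSucc)).left (w (Fin.last m))

/-!
Every state of a product `g * h` at level `m` is a product of a level-`m` state of `g` and a
level-`m` state of `h`. Hence, if `N` contains `1` and the states of products of two elements of `N`
lie again in `N`, then the elements whose states eventually lie in `N` are closed under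
multiplication, and it suffices that `N` generates. For `N = {1, a, b, c, d}`, the products within
`{1, b, c, d}` stay there by the Klein four relations, while multiplying by `a` on either side at
most permutes the states of the other factor, because both entries of `φ a` are trivial.
-/

section States

open scoped Pointwise

variable {G : Type*} [Group G] {d : ℕ} {φ : G →* Wr G d} {N : Set G}

/-- The first-level states of all elements of `S` lie in `T`. For `S = T` this says that `S` is
closed under taking states; for `S = T * T` it is the one-step contraction of products of two
elements of `T`. -/
def StatesMapTo (φ : G →* Wr G d) (S T : Set G) : Prop :=
  ∀ g ∈ S, ∀ i, (φ g).left i ∈ T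

theorem left_map_mul_apply (φ : G →* Wr G d) (g h : G) (i : Fin d) :
    (φ (g * h)).left i = (φ g).left i * (φ h).left ((φ g).right⁻¹ i) := by
  rw [map_mul]
  rfl

theorem StatesMapTo.singleton_mul {S T : Set G} (hST : StatesMapTo φ S T) {g : G}
    (hg : (φ g).left = 1) : StatesMapTo φ ({g} * S) T := by
  rintro _ ⟨_, rfl, h, hh, rfl⟩ i
  rw [left_map_mul_apply, hg, Pi.one_apply, one_mul]
  exact hST h hh _

theorem StatesMapTo.mul_singleton {S T : Set G} (hST : StatesMapTo φ S T) {g : G}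
    (hg : (φ g).left = 1) : StatesMapTo φ (S * {g}) T := by
  rintro _ ⟨h, hh, _, rfl, rfl⟩ i
  rw [left_map_mul_apply, hg, Pi.one_apply, mul_one]
  exact hST h hh i

theorem exists_sst_mul_eq (φ : G →* Wr G d) (g h : G) :
    ∀ (m : ℕ) (w : Fin m → Fin d), ∃ v, sst φ m (g * h) w = sst φ m g w * sst φ m h v
  | 0, w => ⟨w, rfl⟩
  | m + 1, w => by
    obtain ⟨v, hv⟩ := exists_sst_mul_eq φ g h m fun k => w k.castSucc
    refine ⟨Fin.snoc v ((φ (sst φ m g fun k => w k.castSucc)).right⁻¹ (w (Fin.last m))), ?_⟩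
    simp only [sst, hv, left_map_mul_apply, Fin.snoc_castSucc, Fin.snoc_last]

theorem StatesMapTo.sst_mem (hN : StatesMapTo φ N N) {g : G} (hg : g ∈ N) :
    ∀ (m : ℕ) (w : Fin m → Fin d), sst φ m g w ∈ N
  | 0, _ => hg
  | m + 1, _ => hN _ (hN.sst_mem hg m _) _

theorem StatesMapTo.sst_succ_mul_mem {S T U : Set G} (hSTU : StatesMapTo φ (S * T) U) {m : ℕ}
    {g h : G} (hg : ∀ w, sst φ m g w ∈ S) (hh : ∀ w, sst φ m h w ∈ T) (w : Fin (m + 1) → Fin d) :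
    sst φ (m + 1) (g * h) w ∈ U := by
  obtain ⟨v, hv⟩ := exists_sst_mul_eq φ g h m fun k => w k.castSucc
  refine hSTU _ ?_ _
  rw [hv]
  exact Set.mul_mem_mul (hg _) (hh v)

theorem StatesMapTo.exists_forall_sst_mem (hN : StatesMapTo φ (N * N) N) (one_mem : 1 ∈ N)
    (hgen : Submonoid.closure N = ⊤) (g : G) :
    ∃ M : ℕ, ∀ m ≥ M, ∀ w : Fin m → Fin d, sst φ m g w ∈ N := by
  have hN_self : StatesMapTo φ N N := fun g hg => hN g (Set.subset_mul_left N one_mem hg)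
  have hg : g ∈ Submonoid.closure N := hgen ▸ Submonoid.mem_top g
  induction hg using Submonoid.closure_induction with
  | mem g hg => exact ⟨0, fun m _ => hN_self.sst_mem hg m⟩
  | one => exact ⟨0, fun m _ => hN_self.sst_mem one_mem m⟩
  | mul g h _ _ ihg ihh =>
    obtain ⟨Mg, hMg⟩ := ihg
    obtain ⟨Mh, hMh⟩ := ihh
    refine ⟨max Mg Mh + 1, fun m hm w => ?_⟩
    obtain ⟨k, rfl⟩ := Nat.exists_eq_add_of_le' (Nat.one_le_of_lt hm)
    exact hN.sst_succ_mul_mem (hMg k (by omega)) (hMh k (by omega)) w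

end States

theorem mul_mem_of_kleinFour_relations {G : Type*} [Group G] {b c d : G} (hb : b ^ 2 = 1)
    (hc : c ^ 2 = 1) (hd : d ^ 2 = 1) (hbcd : b * c * d = 1) {x y : G}
    (hx : x ∈ ({1, b, c, d} : Set G)) (hy : y ∈ ({1, b, c, d} : Set G)) :
    x * y ∈ ({1, b, c, d} : Set G) := by
  rw [pow_two] at hb hc hd
  have hbc : b * c = d := by
    rw [eq_inv_of_mul_eq_one_left hbcd, inv_eq_of_mul_eq_one_left hd]
  have hcb : c * b = d := by
    simpa only [mul_inv_rev, inv_eq_of_mul_eq_one_left hb, inv_eq_of_mul_eq_one_left hc,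
      inv_eq_of_mul_eq_one_left hd] using congrArg (·⁻¹) hbc
  have hbd : b * d = c := by rw [← hbc, ← mul_assoc, hb, one_mul]
  have hdb : d * b = c := by rw [← hcb, mul_assoc, hb, mul_one]
  have hcd : c * d = b := by rw [← hcb, ← mul_assoc, hc, one_mul]
  have hdc : d * c = b := by rw [← hbc, mul_assoc, hc, mul_one]
  rcases hx with rfl | rfl | rfl | rfl <;> rcases hy with rfl | rfl | rfl | rfl <;> simp [*]

namespace GrigF

open GrigGen
open scoped Pointwise

theorem of_sq (x : GrigGen) : (PresentedGroup.of x : GrigF) ^ 2 = 1 := by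
  have hx : FreeGroup.of x ^ 2 ∈ grigRels := by cases x <;> simp [grigRels]
  exact PresentedGroup.one_of_mem hx

theorem of_b_mul_of_c_mul_of_d :
    (PresentedGroup.of b * PresentedGroup.of c * PresentedGroup.of d : GrigF) = 1 :=
  PresentedGroup.one_of_mem (rels := grigRels) (by simp [grigRels])

/-- The image of `{1, a, b, c, d}` in the Grigorchuk cover, which is shown to be a nucleus. -/
def nucleus : Set GrigF :=
  {1, PresentedGroup.of a, PresentedGroup.of b, PresentedGroup.of c, PresentedGroup.of d}

theorem one_mem_nucleus : 1 ∈ nucleus := Set.mem_insert _ _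

theorem of_mem_nucleus (x : GrigGen) : PresentedGroup.of x ∈ nucleus := by
  cases x <;> simp [nucleus]

theorem nucleus_eq_insert_of_a :
    nucleus = insert (PresentedGroup.of a)
      {1, PresentedGroup.of b, PresentedGroup.of c, PresentedGroup.of d} :=
  Set.insert_comm _ _ _

theorem submonoidClosure_nucleus : Submonoid.closure nucleus = ⊤ := by
  have hfin : ∀ g ∈ Set.range (PresentedGroup.of (rels := grigRels)), IsOfFinOrder g := by
    rintro _ ⟨x, rfl⟩
    exact isOfFinOrder_iff_pow_eq_one.mpr ⟨2, two_pos, of_sq x⟩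
  have hrange : Submonoid.closure (Set.range (PresentedGroup.of (rels := grigRels))) = ⊤ := by
    rw [← Subgroup.closure_toSubmonoid_of_isOfFinOrder hfin, PresentedGroup.closure_range_of,
      Subgroup.top_toSubmonoid]
  exact top_unique (hrange ▸ Submonoid.closure_mono (Set.range_subset_iff.mpr of_mem_nucleus))

variable {φ : GrigF →* Wr GrigF 2}

theorem statesMapTo_nucleus_nucleus
    (ha : (φ (PresentedGroup.of a)).left = 1)
    (hb : (φ (PresentedGroup.of b)).left = ![PresentedGroup.of a, PresentedGroup.of c])
    (hc : (φ (PresentedGroup.of c)).left = ![PresentedGroup.of a, PresentedGroup.of d])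
    (hd : (φ (PresentedGroup.of d)).left = ![1, PresentedGroup.of b]) :
    StatesMapTo φ nucleus nucleus := by
  rintro g (rfl | rfl | rfl | rfl | rfl) i <;> fin_cases i <;>
    simp [ha, hb, hc, hd, one_mem_nucleus, of_mem_nucleus]

theorem statesMapTo_nucleus_mul_nucleus (hN : StatesMapTo φ nucleus nucleus)
    (ha : (φ (PresentedGroup.of a)).left = 1) :
    StatesMapTo φ (nucleus * nucleus) nucleus := by
  rintro _ ⟨g, hg, h, hh, rfl⟩ i
  obtain rfl | hg_klein := nucleus_eq_insert_of_a ▸ hg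
  · exact hN.singleton_mul ha _ (Set.mul_mem_mul rfl hh) i
  obtain rfl | hh_klein := nucleus_eq_insert_of_a ▸ hh
  · exact hN.mul_singleton ha _ (Set.mul_mem_mul hg rfl) i
  have hgh_klein := mul_mem_of_kleinFour_relations (of_sq b) (of_sq c) (of_sq d)
    of_b_mul_of_c_mul_of_d hg_klein hh_klein
  exact hN _ (nucleus_eq_insert_of_a ▸ Set.mem_insert_of_mem _ hgh_klein) i

end GrigF

open GrigGen GrigF in
theorem grigorchuk_cover_contracting_general
    {φ : GrigF →* Wr GrigF 2}
    (ha : (φ (PresentedGroup.of a)).left = 1)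
    (hb : (φ (PresentedGroup.of b)).left = ![PresentedGroup.of a, PresentedGroup.of c])
    (hc : (φ (PresentedGroup.of c)).left = ![PresentedGroup.of a, PresentedGroup.of d])
    (hd : (φ (PresentedGroup.of d)).left = ![1, PresentedGroup.of b]) (g : GrigF) :
    ∃ M : ℕ, ∀ m ≥ M, ∀ w : Fin m → Fin 2, sst φ m g w ∈ nucleus :=
  have hN : StatesMapTo φ nucleus nucleus := statesMapTo_nucleus_nucleus ha hb hc hd
  (statesMapTo_nucleus_mul_nucleus hN ha).exists_forall_sst_mem one_mem_nucleus
    submonoidClosure_nucleus g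

open GrigGen in
/-- The universal contracting cover `(F, φ)` of the Alëshin–Grigorchuk group is
contracting with nucleus the image of `{1, a, b, c, d}` in `F`. -/
theorem grigorchuk_cover_contracting
    (φ : GrigF →* Wr GrigF 2)
    (ha : φ (PresentedGroup.of a) =
      SemidirectProduct.mk ![1, 1] (Equiv.swap 0 1))
    (hb : φ (PresentedGroup.of b) =
      SemidirectProduct.mk ![PresentedGroup.of a, PresentedGroup.of c] 1)
    (hc : φ (PresentedGroup.of c) =
      SemidirectProduct.mk ![PresentedGroup.of a, PresentedGroup.of d] 1)
    (hd : φ (PresentedGroup.of d) =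
      SemidirectProduct.mk ![1, PresentedGroup.of b] 1) :
    ∀ g : GrigF, ∃ M : ℕ, ∀ m ≥ M, ∀ w : Fin m → Fin 2,
      sst φ m g w ∈
        ({1, PresentedGroup.of a, PresentedGroup.of b, PresentedGroup.of c,
          PresentedGroup.of d} : Set GrigF) := by
  have left_a : (φ (PresentedGroup.of a)).left = 1 := by
    ext i
    fin_cases i <;> simp [ha]
  exact grigorchuk_cover_contracting_general left_a (by rw [hb]) (by rw [hc]) (by rw [hd])
end
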